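/- Let r,q,r',q' ≥ 1 with rq > 1 and r'q' > 1, and suppose the Morse count functions coincide: μ_{rq}(i) = μ_{r'q'}(i) for all i ≥ 0, where μ_{rq}(i) := #{ j : i_j = i } for the Morse numbers of σ_{rq}. Then {r,q} = {r',q'} as unordered pairs. -/

import Mathlib

/-- Morse numbers `i_j` of a permutation `σ` of `{1,…,N}` (extended to `ℕ`),
via the recursion `i_1 = 0`,
`i_{j+1} = i_j + (-1)^(j+1) * sign (σ⁻¹(j+1) - σ⁻¹(j))`. -/
def morse (σ : Equiv.Perm ℕ) : ℕ → ℤ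
  | 0 => 0
  | 1 => 0
  | (j+2) => morse σ (j+1) +
      (-1)^(j+2) * Int.sign ((σ.symm (j+2) : ℤ) - (σ.symm (j+1) : ℤ))

/-- Zero numbers `z_{j k}`, recursion in the first index `j`, second index `k` fixed:
`z_{1k} = 0`, `z_{kk} = i_k`, `z_{k+1,k} = min (i_k, i_{k+1})`, and otherwise
`z_{j+1,k} = z_{jk} + ((-1)^(j+1)/2) * (sign (σ⁻¹(j+1) - σ⁻¹(k)) - sign (σ⁻¹(j) - σ⁻¹(k)))`. -/
def zrec (σ : Equiv.Perm ℕ) (k : ℕ) : ℕ → ℤ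
  | 0 => 0
  | 1 => 0
  | (j+2) =>
      if j+2 = k then morse σ k
      else if j+1 = k then min (morse σ k) (morse σ (k+1))
      else zrec σ k (j+1) +
        ((-1)^(j+2) * (Int.sign ((σ.symm (j+2) : ℤ) - (σ.symm k : ℤ))
          - Int.sign ((σ.symm (j+1) : ℤ) - (σ.symm k : ℤ)))) / 2

/-- The zero number `z_{m n}`. -/
def zfun (σ : Equiv.Perm ℕ) (m n : ℕ) : ℤ := zrec σ n m

/-- The connection digraph of a dissipative Morse permutation `σ` of `{1,…,N}`:
an edge `m ⤳ n` iff `i_m = i_n + 1` and no `w` strictly between `m` and `n`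
blocks, i.e. satisfies `z_{mw} = z_{wn} = z_{mn}`. -/
def hasEdge (N : ℕ) (σ : Equiv.Perm ℕ) (m n : ℕ) : Prop :=
  1 ≤ m ∧ m ≤ N ∧ 1 ≤ n ∧ n ≤ N ∧
  morse σ m = morse σ n + 1 ∧
  ¬ ∃ w : ℕ, min m n < w ∧ w < max m n ∧
      zfun σ m w = zfun σ w n ∧ zfun σ w n = zfun σ m n

/-- A dissipative permutation of `{1,…,N}`. -/
def Dissipative (N : ℕ) (σ : Equiv.Perm ℕ) : Prop :=
  Set.BijOn σ (Set.Icc 1 N) (Set.Icc 1 N) ∧ σ 1 = 1 ∧ σ N = N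

/-- The Morse property: all Morse numbers are nonnegative. -/
def MorseProp (N : ℕ) (σ : Equiv.Perm ℕ) : Prop :=
  ∀ j, 1 ≤ j → j ≤ N → 0 ≤ morse σ j

/-- Morse counts `μ(i) = #{j ∈ {1,…,N} : i_j = i}`. -/
def morseCount (N : ℕ) (σ : Equiv.Perm ℕ) (i : ℤ) : ℕ :=
  ((Finset.Icc 1 N).filter (fun j => morse σ j = i)).card

/-- The primitive 3-nose permutation `σ_{rq}` of `{1,…,N}`, `N = 2(r+1)(q+1)-1`,
characterized by its defining relations, extended to a permutation of `ℕ`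
fixing everything outside `{1,…,N}`. -/
def SigmaRQ (r q : ℕ) (σ : Equiv.Perm ℕ) : Prop :=
  (∀ a, a ∉ Set.Icc 1 (2*(r+1)*(q+1) - 1) → σ a = a) ∧
  (∀ j k, j ≤ r → k ≤ q →
    σ (2*((q+1)*j+k)+1) = 2*(j+(r+1)*k)+1) ∧
  (∀ j k, j ≤ r → k ≤ q → ¬(j = 0 ∧ k = 0) →
    σ (2*((q+1)*(r-j)+(q-k)+1)) = 2*(j+(r+1)*k))

/-- Tags `A`, `B` of equilibrium labels `A^j_k`, `B^j_k`. -/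
inductive Tag | A | B
deriving DecidableEq

/-- The axis position (`h_1`-position) of the label `L^j_k` for parameters `(r,q)`. -/
def axisPos (r q : ℕ) : Tag → ℕ → ℕ → ℕ
  | Tag.A, j, k => if Odd j then (q+1)*(j-1)+k+1 else (q+1)*(2*r+1-j)+(q-k)+1
  | Tag.B, j, k => if Odd j then (q+1)*j+(q-k)+1 else (q+1)*(2*r-j)+k+1

/-- The meander position (`h_0`-position) of the label `L^j_k` for parameters `(r,q)`. -/
def meanderPos (r q : ℕ) : Tag → ℕ → ℕ → ℕ
  | Tag.A, j, k => if Odd k then (r+1)*(2*q+1-k)+(2*r+1-j) else (r+1)*k+j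
  | Tag.B, j, k => if Odd k then (r+1)*(2*q+1-k)+j else (r+1)*(k+1)+(r-j)

/-- The suspension `σ̃` of a dissipative permutation `σ` of `{1,…,N}`:
`σ̃(1) = 1`, `σ̃(N+2) = N+2`, and `σ̃(a+1) = N+2 - σ(a)` for `1 ≤ a ≤ N`. -/
def IsSuspension (N : ℕ) (σ σt : Equiv.Perm ℕ) : Prop :=
  σt 1 = 1 ∧ σt (N+2) = N+2 ∧ ∀ a, 1 ≤ a → a ≤ N → σt (a+1) = N+2 - σ a

/-- The label `A^0_0` is the distinguished (formal) vertex `⋆`. -/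
def IsStar (L : Tag) (j k : ℕ) : Prop := L = Tag.A ∧ j = 0 ∧ k = 0

/-- Tag swap `A ↔ B`, used by the reversor. -/
def tagSwap : Tag → Tag
  | Tag.A => Tag.B
  | Tag.B => Tag.A

/-- closed form of the Morse numbers at odd places -/
def oddVal (r q j k : ℤ) : ℤ :=
  if 2*k ≤ q then 2*k + (if 2*j ≤ r then 2*j else 2*(r-j))
  else 2*(q+1-k) + (if 2*j+1 ≤ r then 2*j else 2*(r-1-j))

/-- half-plane indicator -/
def low (r q j k : ℤ) : Prop := (2*k ≤ q ∧ 2*j ≤ r) ∨ (¬ 2*k ≤ q ∧ 2*j+1 ≤ r)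

lemma sign_of_pos' {x : ℤ} (h : 0 < x) : Int.sign x = 1 := Int.sign_eq_one_of_pos h

lemma symm_odd {r q : ℕ} {σ : Equiv.Perm ℕ} (h : SigmaRQ r q σ) {j k : ℕ}
    (hj : j ≤ r) (hk : k ≤ q) :
    ((σ.symm (2*(j+(r+1)*k)+1) : ℕ) : ℤ) = 2*((q+1)*j+k)+1 := by
  have : σ.symm (2*(j+(r+1)*k)+1) = 2*((q+1)*j+k)+1 := by
    rw [Equiv.symm_apply_eq, h.2.1 j k hj hk]
  rw [this]; push_cast; ring

lemma symm_even {r q : ℕ} {σ : Equiv.Perm ℕ} (h : SigmaRQ r q σ) {j k : ℕ}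
    (hj : j ≤ r) (hk : k ≤ q) (h0 : ¬ (j = 0 ∧ k = 0)) :
    ((σ.symm (2*(j+(r+1)*k)) : ℕ) : ℤ) = 2*((q+1)*(r-j)+(q-k)+1) := by
  have : σ.symm (2*(j+(r+1)*k)) = 2*((q+1)*(r-j)+(q-k)+1) := by
    rw [Equiv.symm_apply_eq, h.2.2 j k hj hk h0]
  rw [this]; push_cast [Nat.cast_sub hj, Nat.cast_sub hk]; ring

lemma low_iff {r q j k : ℤ} (hk0 : 0 ≤ k) (hk : k ≤ q) :
    low r q j k ↔ 2*k < (r+1-2*j)*(q+1) := by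
  unfold low
  constructor
  · rintro (⟨h1, h2⟩ | ⟨h1, h2⟩)
    · nlinarith [mul_nonneg (show 0 ≤ r - 2*j by linarith) (show 0 ≤ q+1 by linarith)]
    · nlinarith [mul_nonneg (show 0 ≤ r - 2*j - 1 by linarith) (show 0 ≤ q+1 by linarith)]
  · intro h
    by_cases h1 : 2*k ≤ q
    · left
      refine ⟨h1, ?_⟩
      by_contra h2
      nlinarith [mul_nonneg (show 0 ≤ 2*j - r - 1 by omega) (show 0 ≤ q+1 by linarith)]
    · right
      refine ⟨h1, ?_⟩
      by_contra h2
      nlinarith [mul_nonneg (show 0 ≤ 2*j - r by omega) (show 0 ≤ q+1 by linarith)]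

lemma morse_succ (σ : Equiv.Perm ℕ) (n : ℕ) (hn : 1 ≤ n) :
    morse σ (n+1) = morse σ n +
      (-1)^(n+1) * Int.sign ((σ.symm (n+1) : ℤ) - (σ.symm n : ℤ)) := by
  obtain ⟨m, rfl⟩ : ∃ m, n = m+1 := ⟨n-1, by omega⟩
  rfl

open Classical in
lemma step1 {r q : ℕ} {σ : Equiv.Perm ℕ} (h : SigmaRQ r q σ) {j k : ℕ}
    (hj : j ≤ r) (hk : k ≤ q) (h0 : ¬ (j = 0 ∧ k = 0)) :
    morse σ (2*(j+(r+1)*k)+1) = morse σ (2*(j+(r+1)*k)) +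
      if low r q j k then 1 else -1 := by
  have hpos : 1 ≤ 2*(j+(r+1)*k) := by
    rcases Nat.eq_zero_or_pos j with hj0 | hj0
    · have : 0 < k := by omega
      have := Nat.mul_pos (Nat.succ_pos r) this
      have : 0 < (r+1)*k := this
      omega
    · omega
  rw [morse_succ _ _ hpos, symm_odd h hj hk, symm_even h hj hk h0, pow_succ,
    Even.neg_one_pow (even_two_mul _)]
  have hL := low_iff (r := r) (q := q) (j := j) (k := k) (by positivity) (by exact_mod_cast hk)
  split_ifs with hl
  · rw [Int.sign_eq_neg_one_of_neg]
    · norm_num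
    · have := hL.1 hl
      linarith
  · rw [Int.sign_eq_one_of_pos]
    · norm_num
    · have := mt hL.2 hl
      linarith

open Classical in
lemma step2 {r q : ℕ} {σ : Equiv.Perm ℕ} (h : SigmaRQ r q σ) {j k : ℕ}
    (hj : j + 1 ≤ r) (hk : k ≤ q) :
    morse σ (2*((j+1)+(r+1)*k)) = morse σ (2*(j+(r+1)*k)+1) +
      if low (r+1) q (j+1) k then 1 else -1 := by
  have e : 2*((j+1)+(r+1)*k) = 2*(j+(r+1)*k)+1+1 := by ring
  have hE := symm_even h hj hk (by omega)
  rw [e] at hE ⊢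
  rw [morse_succ _ _ (by omega), hE, symm_odd h (by omega) hk, pow_succ, pow_succ,
    Even.neg_one_pow (even_two_mul _)]
  have hL := low_iff (r := r+1) (q := q) (j := j+1) (k := k) (by positivity) (by exact_mod_cast hk)
  push_cast
  split_ifs with hl
  · rw [Int.sign_eq_one_of_pos]
    · norm_num
    · have := hL.1 hl
      linarith
  · rw [Int.sign_eq_neg_one_of_neg]
    · norm_num
    · have := mt hL.2 hl
      linarith

lemma step3 {r q : ℕ} {σ : Equiv.Perm ℕ} (h : SigmaRQ r q σ) {k : ℕ}
    (hk : k + 1 ≤ q) :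
    morse σ (2*(0+(r+1)*(k+1))) = morse σ (2*(r+(r+1)*k)+1) +
      if 2*(k:ℤ) < q then 1 else -1 := by
  have e : 2*(0+(r+1)*(k+1)) = 2*(r+(r+1)*k)+1+1 := by ring
  have hE := symm_even h (Nat.zero_le r) hk (by omega)
  rw [e] at hE ⊢
  rw [morse_succ _ _ (by omega), hE, symm_odd h le_rfl (by omega), pow_succ, pow_succ,
    Even.neg_one_pow (even_two_mul _)]
  push_cast
  split_ifs with hl
  · rw [Int.sign_eq_one_of_pos]
    · norm_num
    · have : (k:ℤ)*2 + 1 ≤ q := by omega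
      linarith
  · rw [Int.sign_eq_neg_one_of_neg]
    · norm_num
    · linarith

lemma morse_odd {r q : ℕ} {σ : Equiv.Perm ℕ} (hr : 1 ≤ r) (h : SigmaRQ r q σ) (k : ℕ) :
    ∀ j, j ≤ r → k ≤ q → morse σ (2*(j+(r+1)*k)+1) = oddVal r q j k := by
  classical
  have row : ∀ k, k ≤ q → morse σ (2*(0+(r+1)*k)+1) = oddVal r q 0 k →
      ∀ j, j ≤ r → morse σ (2*(j+(r+1)*k)+1) = oddVal r q j k := by
    intro k hk h0 j
    induction j with
    | zero => intro _; simpa using h0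
    | succ j ih =>
      intro hj
      rw [step1 h hj hk (by omega), step2 h hj hk, ih (by omega)]
      simp only [oddVal, low]
      push_cast
      split_ifs <;> omega
  induction k with
  | zero =>
    intro j hj hk
    refine row 0 hk ?_ j hj
    simp [oddVal, morse]
  | succ k ih =>
    intro j hj hk
    refine row (k+1) hk ?_ j hj
    rw [step1 h (Nat.zero_le _) hk (by omega), step3 h hk, ih r le_rfl (by omega)]
    simp only [oddVal, low]
    push_cast
    split_ifs <;> omega

open Classical in
lemma morse_even {r q : ℕ} {σ : Equiv.Perm ℕ} (hr : 1 ≤ r) (h : SigmaRQ r q σ) {j k : ℕ}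
    (hj : j ≤ r) (hk : k ≤ q) (h0 : ¬ (j = 0 ∧ k = 0)) :
    morse σ (2*(j+(r+1)*k)) = oddVal r q j k - if low r q j k then 1 else -1 := by
  rw [← morse_odd hr h k j hj hk, step1 h hj hk h0]; ring

lemma morse_bounds {r q : ℕ} {σ : Equiv.Perm ℕ} (hr : 1 ≤ r) (h : SigmaRQ r q σ) {n : ℕ}
    (hn : 1 ≤ n) (hn' : n ≤ 2*(r+1)*(q+1)-1) : 0 ≤ morse σ n ∧ morse σ n ≤ r + q := by
  classical
  obtain ⟨j, k, hj, hjk⟩ : ∃ j k, j ≤ r ∧ n / 2 = j + (r+1)*k :=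
    ⟨(n/2) % (r+1), (n/2)/(r+1), Nat.lt_succ_iff.1 (Nat.mod_lt _ (Nat.succ_pos r)),
      (Nat.mod_add_div _ _).symm⟩
  have hk : k ≤ q := by
    by_contra hc
    have h1 : (r+1)*(q+1) ≤ (r+1)*k := Nat.mul_le_mul_left _ (by omega)
    have h2 : 2*(r+1)*(q+1) = 2*((r+1)*(q+1)) := by ring
    omega
  rcases Nat.mod_two_eq_zero_or_one n with hm | hm
  · have hne : ¬ (j = 0 ∧ k = 0) := by
      rintro ⟨rfl, rfl⟩
      simp at hjk
      omega
    have e : n = 2*(j+(r+1)*k) := by omega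
    rw [e, morse_even hr h hj hk hne]
    simp only [oddVal, low]
    split_ifs <;> omega
  · have e : n = 2*(j+(r+1)*k)+1 := by omega
    rw [e, morse_odd hr h k j hj hk]
    simp only [oddVal]
    split_ifs <;> omega

lemma index_le {r q j k : ℕ} (hj : j ≤ r) (hk : k ≤ q) :
    2*(j+(r+1)*k)+1 ≤ 2*(r+1)*(q+1)-1 := by
  have h1 : (r+1)*k ≤ (r+1)*q := Nat.mul_le_mul_left _ hk
  have h2 : 2*(r+1)*(q+1) = 2*((r+1)*q) + 2*(r+1) := by ring
  omega

lemma morse_attained {r q : ℕ} {σ : Equiv.Perm ℕ} (hr : 1 ≤ r) (hq : 1 ≤ q)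
    (h : SigmaRQ r q σ) :
    ∃ n, 1 ≤ n ∧ n ≤ 2*(r+1)*(q+1)-1 ∧ morse σ n = r + q := by
  classical
  have hk : (q+1)/2 ≤ q := by omega
  by_cases hpar : (r + q) % 2 = 0
  · have hj : r/2 ≤ r := by omega
    refine ⟨_, by omega, index_le hj hk, ?_⟩
    rw [morse_odd hr h _ _ hj hk]
    simp only [oddVal]
    split_ifs <;> omega
  · have hj : (if q % 2 = 0 then (r+1)/2 else r/2) ≤ r := by split_ifs <;> omega
    have hpos : 1 ≤ (r+1)*((q+1)/2) := Nat.mul_pos (by omega) (by omega)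
    have := index_le hj hk
    refine ⟨2*((if q % 2 = 0 then (r+1)/2 else r/2) + (r+1)*((q+1)/2)), by omega, by omega, ?_⟩
    rw [morse_even hr h hj hk (by omega)]
    simp only [oddVal, low]
    split_ifs <;> omega

lemma count_sum {r q : ℕ} {σ : Equiv.Perm ℕ} (hr : 1 ≤ r) (h : SigmaRQ r q σ) :
    ∑ i ∈ Finset.range (r+q+1), morseCount (2*(r+1)*(q+1)-1) σ (i:ℤ) = 2*(r+1)*(q+1)-1 := by
  have hc := Finset.card_eq_sum_card_fiberwise (s := Finset.Icc 1 (2*(r+1)*(q+1)-1))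
    (t := Finset.range (r+q+1)) (f := fun n => (morse σ n).toNat) (by
      intro n hn
      have hn := Finset.mem_Icc.1 (Finset.mem_coe.1 hn)
      have := morse_bounds hr h hn.1 hn.2
      simp only [Finset.coe_range, Set.mem_Iio]
      omega)
  rw [Nat.card_Icc, Nat.add_sub_cancel] at hc
  refine Eq.trans ?_ hc.symm
  refine Finset.sum_congr rfl fun i _ => ?_
  unfold morseCount
  congr 1
  refine Finset.filter_congr fun n hn => ?_
  have hn := Finset.mem_Icc.1 hn
  have := morse_bounds hr h hn.1 hn.2
  omega

lemma sum_le_of_count {r q r' q' : ℕ} (hr : 1 ≤ r) (hq : 1 ≤ q) (hr' : 1 ≤ r')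
    {σ σ' : Equiv.Perm ℕ} (hσ : SigmaRQ r q σ) (hσ' : SigmaRQ r' q' σ')
    (hμ : ∀ i : ℕ, morseCount (2*(r+1)*(q+1)-1) σ i
      = morseCount (2*(r'+1)*(q'+1)-1) σ' i) : r + q ≤ r' + q' := by
  obtain ⟨n, h1, h2, h3⟩ := morse_attained hr hq hσ
  have hp : 0 < morseCount (2*(r+1)*(q+1)-1) σ ((r+q : ℕ) : ℤ) :=
    Finset.card_pos.2 ⟨n, by simp only [Finset.mem_filter, Finset.mem_Icc]; push_cast; exact ⟨⟨h1, h2⟩, h3⟩⟩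
  rw [hμ] at hp
  obtain ⟨m, hm⟩ := Finset.card_pos.1 hp
  simp only [Finset.mem_filter, Finset.mem_Icc] at hm
  have := morse_bounds hr' hσ' hm.1.1 hm.1.2
  omega

/-- the Morse count function determines the subscript set `{r,q}`. -/
theorem stmt_4 (r q r' q' : ℕ) (hr : 1 ≤ r) (hq : 1 ≤ q)
    (hr' : 1 ≤ r') (hq' : 1 ≤ q') (hrq : 1 < r*q) (hrq' : 1 < r'*q')
    (σ σ' : Equiv.Perm ℕ) (hσ : SigmaRQ r q σ) (hσ' : SigmaRQ r' q' σ')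
    (hμ : ∀ i : ℕ, morseCount (2*(r+1)*(q+1)-1) σ i
      = morseCount (2*(r'+1)*(q'+1)-1) σ' i) :
    (r = r' ∧ q = q') ∨ (r = q' ∧ q = r') := by
  have hs : r + q = r' + q' :=
    le_antisymm (sum_le_of_count hr hq hr' hσ hσ' hμ)
      (sum_le_of_count hr' hq' hr hσ' hσ (fun i => (hμ i).symm))
  have h1 := count_sum hr hσ
  have h2 := count_sum hr' hσ'
  rw [← hs, ← Finset.sum_congr rfl (fun i _ => hμ i), h1] at h2
  have hp : r * q = r' * q' := by
    have e1 : 2*(r+1)*(q+1) = 2*(r*q) + 2*(r+q) + 2 := by ring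
    have e2 : 2*(r'+1)*(q'+1) = 2*(r'*q') + 2*(r'+q') + 2 := by ring
    omega
  have hz : ((r:ℤ) - r') * (r - q') = 0 := by
    have hs' : (r:ℤ) + q = r' + q' := by exact_mod_cast hs
    have hp' : (r:ℤ) * q = r' * q' := by exact_mod_cast hp
    linear_combination (r:ℤ) * hs' - hp'
  rcases mul_eq_zero.1 hz with h | h
  · left; omega
  · right; omega
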